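/- For every k ≥ 1, δ(h k) < 1 / 2^k, where δ(t) = lim_{j→∞} δ_j(t) is the limiting coding distance between the shift by t and the identity. -/

import Mathlib

open MeasureTheory Filter Topology
open scoped ENNReal

/-- `m`-fold concatenation of a word. -/
def wordPow (w : List ℕ) (m : ℕ) : List ℕ := (List.replicate m w).flatten

/-- The words of the generalized del Junco–Rudolph construction:
`B 0 = [0]`, `B (k+1) = (B k)^(a·b^k) ++ [1] ++ (B k)^((b-a)·b^k)`. -/
def Bword (b a : ℕ) : ℕ → List ℕ
  | 0 => [0]
  | k + 1 => wordPow (Bword b a k) (a * b ^ k) ++ [1] ++ wordPow (Bword b a k) ((b - a) * b ^ k)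

/-- The height sequence: `h 0 = 1`, `h (k+1) = b^(k+1) * h k + 1`. -/
def hseq (b : ℕ) : ℕ → ℕ
  | 0 => 1
  | k + 1 => b ^ (k + 1) * hseq b k + 1

/-- The coding distance `δ_k^(N)(t)` computed from the word `ξ^{N,k} = (B k)^N`. -/
noncomputable def deltaN (b a k t N : ℕ) : ℝ :=
  (1 / ((N * hseq b k : ℕ) : ℝ)) *
    ∑ i ∈ Finset.range (N * hseq b k),
      if i + t < N * hseq b k then
        |(((wordPow (Bword b a k) N).getD (i + t) 0 : ℕ) : ℝ) -
          (((wordPow (Bword b a k) N).getD i 0 : ℕ) : ℝ)|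
      else 1

inductive DTail (B : List ℕ) : List ℕ → ℕ → Prop
  | nil : DTail B [] 0
  | zero (r : List ℕ) (n : ℕ) : DTail B r n → DTail B (B ++ r) n
  | one (r : List ℕ) (n : ℕ) : DTail B r n → DTail B (1 :: (B ++ r)) (n + 1)

def DHead (B u : List ℕ) (n : ℕ) : Prop := ∃ r, u = B ++ r ∧ DTail B r n

theorem DTail.append {B u v : List ℕ} {n m : ℕ} (hu : DTail B u n) (hv : DTail B v m) :
    DTail B (u ++ v) (n + m) := by
  induction hu with
  | nil => simpa using hv
  | zero r n _ ih => rw [List.append_assoc]; exact DTail.zero _ _ ih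
  | one r n _ ih =>
    have := DTail.one _ _ ih
    rw [show n + 1 + m = n + m + 1 by omega]
    simpa using this

theorem DHead.tail {B u : List ℕ} {n : ℕ} (h : DHead B u n) : DTail B u n := by
  obtain ⟨r, rfl, hr⟩ := h
  exact DTail.zero _ _ hr

theorem DHead.tail_one {B u : List ℕ} {n : ℕ} (h : DHead B u n) : DTail B (1 :: u) (n + 1) := by
  obtain ⟨r, rfl, hr⟩ := h
  exact DTail.one _ _ hr

theorem DHead.append {B u v : List ℕ} {n m : ℕ} (hu : DHead B u n) (hv : DTail B v m) :
    DHead B (u ++ v) (n + m) := by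
  obtain ⟨r, rfl, hr⟩ := hu
  exact ⟨r ++ v, by simp, hr.append hv⟩

theorem wordPow_succ (w : List ℕ) (m : ℕ) : wordPow w (m + 1) = w ++ wordPow w m := by
  simp [wordPow, List.replicate_succ]

theorem wordPow_zero (w : List ℕ) : wordPow w 0 = [] := by simp [wordPow]

theorem length_wordPow (w : List ℕ) (m : ℕ) : (wordPow w m).length = m * w.length := by
  simp [wordPow]

theorem sum_wordPow (w : List ℕ) (m : ℕ) : (wordPow w m).sum = m * w.sum := by
  induction m with
  | zero => simp [wordPow_zero]
  | succ m ih => rw [wordPow_succ, List.sum_append, ih]; ring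

theorem DTail.wordPow {B u : List ℕ} {n : ℕ} (h : DTail B u n) (m : ℕ) :
    DTail B (wordPow u m) (m * n) := by
  induction m with
  | zero => rw [wordPow_zero, zero_mul]; exact DTail.nil
  | succ m ih =>
    rw [wordPow_succ, show (m + 1) * n = n + m * n by ring]
    exact h.append ih

theorem DHead.wordPow {B u : List ℕ} {n : ℕ} (h : DHead B u n) (m : ℕ) (hm : 1 ≤ m) :
    DHead B (wordPow u m) (m * n) := by
  obtain ⟨m, rfl⟩ := Nat.exists_eq_add_of_le' hm
  rw [wordPow_succ, show (m + 1) * n = n + m * n by ring]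
  exact h.append (h.tail.wordPow m)

theorem exps (b a : ℕ) (ha2 : a ≤ b) (k : ℕ) :
    a * b ^ k + (b - a) * b ^ k = b ^ (k + 1) := by
  rw [← add_mul, Nat.add_sub_cancel' ha2, pow_succ, mul_comm]

theorem DHead.Bword_succ {b a : ℕ} (hb : 2 ≤ b) (ha1 : 1 ≤ a) (ha2 : a ≤ b - 1)
    {B : List ℕ} {j p : ℕ} (h : DHead B (Bword b a j) p) :
    DHead B (Bword b a (j + 1)) (b ^ (j + 1) * p + 1) := by
  have hpos : 0 < b ^ j := by positivity
  have h1 : 1 ≤ a * b ^ j := Nat.mul_pos ha1 hpos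
  have h2 : 1 ≤ (b - a) * b ^ j := Nat.mul_pos (by omega) hpos
  have he := exps b a (by omega) j
  obtain ⟨m, hm⟩ := Nat.exists_eq_add_of_le' h2
  have := (h.wordPow _ h1).append (h.tail_one.append (h.tail.wordPow m))
  rw [Bword, hm, wordPow_succ, ← he, hm]
  rw [show (a * b ^ j + (m + 1)) * p + 1 = a * b ^ j * p + (p + 1 + m * p) by ring]
  simpa using this

theorem length_Bword {b a : ℕ} (ha2 : a ≤ b) (k : ℕ) : (Bword b a k).length = hseq b k := by
  induction k with
  | zero => simp [Bword, hseq]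
  | succ k ih =>
    simp only [Bword, hseq, List.length_append, length_wordPow, ih, ← exps b a ha2 k,
      List.length_singleton]
    ring

theorem sum_Bword {b a : ℕ} (hb : 2 ≤ b) (ha2 : a ≤ b) (k : ℕ) :
    2 * (Bword b a k).sum + 1 ≤ hseq b k := by
  induction k with
  | zero => simp [Bword, hseq]
  | succ k ih =>
    have h2 : 2 ≤ b ^ (k + 1) := le_trans hb (Nat.le_self_pow (by omega) b)
    simp only [Bword, hseq, List.sum_append, sum_wordPow, List.sum_singleton]
    have he := exps b a ha2 k
    have : a * b ^ k * (Bword b a k).sum + 1 + (b - a) * b ^ k * (Bword b a k).sum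
      = b ^ (k + 1) * (Bword b a k).sum + 1 := by rw [← he]; ring
    rw [this]
    nlinarith [Nat.mul_le_mul_left (b ^ (k + 1)) ih]

def zd : List ℕ → List ℕ → ℕ
  | x :: u, y :: v => ((x - y) + (y - x)) + zd u v
  | _, _ => 0

theorem zd_le (u v : List ℕ) : zd u v ≤ u.sum + v.sum := by
  induction u generalizing v with
  | nil => simp [zd]
  | cons x u ih =>
    cases v with
    | nil => simp [zd]
    | cons y v => simp only [zd, List.sum_cons]; have := ih v; omega

theorem zd_nil (u : List ℕ) : zd u [] = 0 := by cases u <;> simp [zd]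

theorem zd_self (u : List ℕ) : zd u u = 0 := by
  induction u with
  | nil => simp [zd]
  | cons x u ih => simp [zd, ih]

theorem zd_append (u v x y : List ℕ) (h : u.length = v.length) :
    zd (u ++ x) (v ++ y) = zd u v + zd x y := by
  induction u generalizing v with
  | nil => cases v with
    | nil => simp [zd]
    | cons => simp at h
  | cons a u ih =>
    cases v with
    | nil => simp at h
    | cons c v => simp only [List.cons_append, zd, ih v (by simpa using h)]; ring

theorem zd_tail {B r : List ℕ} {n : ℕ} (h : DTail B r n) :
    zd (B ++ r) r ≤ (2 * B.sum + 2) * n := by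
  induction h with
  | nil => simp [zd_nil]
  | zero r n _ ih => rw [zd_append _ _ _ _ rfl, zd_self]; omega
  | one r n _ ih =>
    have e1 : B ++ 1 :: (B ++ r) = (B ++ [1]) ++ (B ++ r) := by simp
    have e2 : 1 :: (B ++ r) = (1 :: B) ++ r := by simp
    have := zd_le (B ++ [1]) (1 :: B)
    simp only [List.sum_append, List.sum_cons, List.sum_nil] at this
    rw [e1, e2, zd_append _ _ _ _ (by simp)]
    nlinarith

theorem sum_zd (u v : List ℕ) :
    ∑ i ∈ Finset.range u.length,
      (if i < v.length then |((v.getD i 0 : ℕ) : ℝ) - ((u.getD i 0 : ℕ) : ℝ)| else 1)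
      = ((zd u v + (u.length - v.length) : ℕ) : ℝ) := by
  induction u generalizing v with
  | nil => simp [zd]
  | cons x u ih =>
    cases v with
    | nil => simp [zd]
    | cons y v =>
      rw [List.length_cons, Finset.sum_range_succ']
      have := ih v
      simp only [List.length_cons, Nat.add_lt_add_iff_right, List.getD_cons_succ, this,
        List.getD_cons_zero, Nat.zero_lt_succ, if_true, zd, Nat.add_sub_add_right]
      have hxy : |((y : ℕ) : ℝ) - x| = ((x - y + (y - x) : ℕ) : ℝ) := by
        rcases le_total x y with h | h
        · rw [Nat.sub_eq_zero_of_le h, zero_add, Nat.cast_sub h, abs_of_nonneg]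
          have : (x : ℝ) ≤ y := by exact_mod_cast h
          linarith
        · rw [Nat.sub_eq_zero_of_le h, add_zero, Nat.cast_sub h, abs_sub_comm, abs_of_nonneg]
          have : (y : ℝ) ≤ x := by exact_mod_cast h
          linarith
      rw [hxy]
      push_cast
      ring

theorem deltaN_le {b a : ℕ} (ha2 : a ≤ b) {k j p N : ℕ}
    (hN : 1 ≤ N) (h : DHead (Bword b a k) (Bword b a j) p) :
    deltaN b a j (hseq b k) N ≤ (1 / ((N * hseq b j : ℕ) : ℝ)) *
      (((2 * (Bword b a k).sum + 2) * (N * p) + hseq b k : ℕ) : ℝ) := by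
  obtain ⟨r, hr, ht⟩ := h.wordPow N hN
  have hlen : (wordPow (Bword b a j) N).length = N * hseq b j := by
    rw [length_wordPow, length_Bword ha2]
  have hB := length_Bword (a := a) ha2 k
  unfold deltaN
  refine mul_le_mul_of_nonneg_left ?_ (by positivity)
  have key := sum_zd (wordPow (Bword b a j) N) r
  have hrl : hseq b k + r.length = N * hseq b j := by
    rw [← hlen, hr, List.length_append, hB]
  have hg : ∀ i, (wordPow (Bword b a j) N).getD (i + hseq b k) 0 = r.getD i 0 := by
    intro i
    rw [hr, List.getD_append_right _ _ _ _ (by omega), hB, Nat.add_sub_cancel]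
  have hz := zd_tail ht
  rw [← hr] at hz
  have hiff : ∀ i, (i + hseq b k < N * hseq b j) = (i < r.length) := by
    intro i; apply propext; omega
  simp only [hg, hiff]
  rw [hlen] at key
  rw [key]
  have : zd (wordPow (Bword b a j) N) r + (N * hseq b j - r.length) ≤
    (2 * (Bword b a k).sum + 2) * (N * p) + hseq b k := by omega
  exact_mod_cast this

theorem hseq_pos (b k : ℕ) (hb : 2 ≤ b) : 1 ≤ hseq b k := by
  cases k <;> simp [hseq]

theorem exists_head {b a : ℕ} (hb : 2 ≤ b) (ha1 : 1 ≤ a) (ha2 : a ≤ b - 1) (k j : ℕ)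
    (hj : k + 1 ≤ j) : ∃ p, DHead (Bword b a k) (Bword b a j) p ∧
      3 * p * hseq b (k + 1) + hseq b (k + 1) ≤ 4 * hseq b j := by
  induction j, hj using Nat.le_induction with
  | base =>
    have h0 : DHead (Bword b a k) (Bword b a k) 0 := ⟨[], by simp, DTail.nil⟩
    refine ⟨_, h0.Bword_succ hb ha1 ha2, ?_⟩
    omega
  | succ j hj ih =>
    obtain ⟨p, hp, hle⟩ := ih
    refine ⟨_, hp.Bword_succ hb ha1 ha2, ?_⟩
    have h4 : 4 ≤ b ^ (j + 1) :=
      calc 4 = 2 ^ 2 := by norm_num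
        _ ≤ b ^ 2 := Nat.pow_le_pow_left hb 2
        _ ≤ b ^ (j + 1) := Nat.pow_le_pow_right (by omega) (by omega)
    rw [show hseq b (j + 1) = b ^ (j + 1) * hseq b j + 1 from rfl]
    nlinarith [Nat.mul_le_mul_left (b ^ (j + 1)) hle, Nat.mul_le_mul_right (hseq b (k + 1)) h4]

/-- the limiting coding distance satisfies `δ(h k) < 1 / 2^k` for `k ≥ 1`. -/
theorem delta_hseq_lt (b a : ℕ) (hb : 2 ≤ b) (ha1 : 1 ≤ a) (ha2 : a ≤ b - 1)
    (δk : ℕ → ℕ → ℝ)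
    (hδk : ∀ j ≥ 1, ∀ t ≥ 1, Tendsto (fun N => deltaN b a j t N) atTop (𝓝 (δk j t)))
    (δ : ℕ → ℝ) (hδ : ∀ t ≥ 1, Tendsto (fun j => δk j t) atTop (𝓝 (δ t)))
    (k : ℕ) (hk : 1 ≤ k) :
    δ (hseq b k) < 1 / 2 ^ k := by
  have ha : a ≤ b := by omega
  have hh : ∀ j, (0 : ℝ) < hseq b j := fun j => by exact_mod_cast hseq_pos b j hb
  have hkpos := hseq_pos b k hb
  have hs := sum_Bword hb ha k
  have main : ∀ j ≥ k + 1, δk j (hseq b k) ≤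
      (hseq b k + 1) * (4 / (3 * (hseq b (k + 1) : ℝ))) := by
    intro j hj
    obtain ⟨p, hp, hle⟩ := exists_head hb ha1 ha2 k j hj
    have hlim : Tendsto (fun N : ℕ => ((2 * (Bword b a k).sum + 2 : ℕ) : ℝ) * (p / hseq b j)
        + ((hseq b k : ℝ) / hseq b j) * (1 / (N : ℝ))) atTop
        (𝓝 (((2 * (Bword b a k).sum + 2 : ℕ) : ℝ) * (p / hseq b j)
          + ((hseq b k : ℝ) / hseq b j) * 0)) :=
      tendsto_const_nhds.add (tendsto_const_nhds.mul tendsto_one_div_atTop_nhds_zero_nat)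
    have h1 := le_of_tendsto_of_tendsto (hδk j (by omega) (hseq b k) hkpos) hlim (by
      filter_upwards [eventually_ge_atTop 1] with N hN
      refine (deltaN_le ha hN hp).trans (le_of_eq ?_)
      have : (N : ℝ) ≠ 0 := by positivity
      have := (hh j).ne'
      push_cast
      field_simp)
    rw [mul_zero, add_zero] at h1
    refine h1.trans ?_
    have hc : ((2 * (Bword b a k).sum + 2 : ℕ) : ℝ) ≤ hseq b k + 1 := by
      exact_mod_cast (by omega : 2 * (Bword b a k).sum + 2 ≤ hseq b k + 1)
    have hq : (p : ℝ) / hseq b j ≤ 4 / (3 * (hseq b (k + 1) : ℝ)) := by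
      rw [div_le_div_iff₀ (hh j) (by have := hh (k + 1); positivity)]
      have : p * (3 * hseq b (k + 1)) ≤ 4 * hseq b j := by nlinarith
      exact_mod_cast this
    have := hh j
    exact mul_le_mul hc hq (by positivity) (by positivity)
  have hfin : δ (hseq b k) ≤ (hseq b k + 1) * (4 / (3 * (hseq b (k + 1) : ℝ))) :=
    le_of_tendsto (hδ _ hkpos) (by
      filter_upwards [eventually_ge_atTop (k + 1)] with j hj
      exact main j hj)
  refine hfin.trans_lt ?_
  have h2k : 3 ≤ hseq b k := by
    obtain ⟨m, rfl⟩ := Nat.exists_eq_add_of_le' hk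
    have h2 : 2 ≤ b ^ (m + 1) := le_trans hb (Nat.le_self_pow (by omega) b)
    have := hseq_pos b m hb
    simp only [hseq]
    nlinarith
  have hpw : 2 ^ (k + 1) ≤ b ^ (k + 1) := Nat.pow_le_pow_left hb _
  have hnat : (hseq b k + 1) * 4 * 2 ^ k < 3 * hseq b (k + 1) := by
    rw [show hseq b (k + 1) = b ^ (k + 1) * hseq b k + 1 from rfl]
    have := Nat.mul_le_mul_right (hseq b k) hpw
    rw [pow_succ 2 k] at this
    have h3 := Nat.mul_le_mul_right (2 ^ k) h2k
    have h4 : 0 < 2 ^ k := by positivity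
    clear main hfin
    generalize b ^ (k + 1) * hseq b k = X at *
    generalize 2 ^ k = P at *
    generalize hseq b k = H at *
    nlinarith
  rw [← mul_div_assoc, div_lt_div_iff₀ (by have := hh (k + 1); positivity) (by positivity), one_mul]
  exact_mod_cast hnat
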